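/- Let (X_i)_{i≥1} be a sequence of random variables on (Ω, 𝒜) that is IID under E̅, with E̅[X₁] = E̅[−X₁] = 0 and E̅[X₁²] < ∞. Then for all m ≥ 0 and n ≥ 1, E̅[(S_{m+n} − S_m)²] ≤ n · E̅[X₁²]. -/

import Mathlib

open MeasureTheory Filter Topology

/-- Upper expectation `E̅[X] = sup_{P ∈ 𝒬} E_P[X]` of a set of probability measures. -/
noncomputable def upperExp {Ω : Type*} [MeasurableSpace Ω]
    (𝒬 : Set (Measure Ω)) (X : Ω → ℝ) : ℝ :=
  sSup ((fun P : Measure Ω => ∫ ω, X ω ∂P) '' 𝒬)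

/-- `E̅[X]` is finite: `X` is integrable under each `P ∈ 𝒬` and the
integrals are bounded above. -/
def HasFiniteUpperExp {Ω : Type*} [MeasurableSpace Ω]
    (𝒬 : Set (Measure Ω)) (X : Ω → ℝ) : Prop :=
  (∀ P ∈ 𝒬, Integrable X P) ∧ BddAbove ((fun P : Measure Ω => ∫ ω, X ω ∂P) '' 𝒬)

/-- Peng independence of a random variable `Y` from a random vector `X` under
the upper expectation associated with `𝒬`. -/
def PengIndep {Ω : Type*} [MeasurableSpace Ω]
    (𝒬 : Set (Measure Ω)) {d : ℕ} (X : Ω → (Fin d → ℝ)) (Y : Ω → ℝ) : Prop :=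
  ∀ φ : (Fin d → ℝ) → ℝ → ℝ,
    Measurable (fun p : (Fin d → ℝ) × ℝ => φ p.1 p.2) →
    HasFiniteUpperExp 𝒬 (fun ω => φ (X ω) (Y ω)) →
    (∀ x, HasFiniteUpperExp 𝒬 (fun ω => φ x (Y ω))) →
    HasFiniteUpperExp 𝒬 (fun ω => upperExp 𝒬 (fun ω' => φ (X ω) (Y ω'))) →
    upperExp 𝒬 (fun ω => φ (X ω) (Y ω)) =
      upperExp 𝒬 (fun ω => upperExp 𝒬 (fun ω' => φ (X ω) (Y ω')))

/-- A sequence `(X_i)` is IID under the upper expectation: each `X_i` has the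
same distribution as `X_0` (tested against measurable functions with finite
expectations) and `X_{i+1}` is Peng-independent of `(X_0, …, X_i)`. -/
def IsIIDUnder {Ω : Type*} [MeasurableSpace Ω]
    (𝒬 : Set (Measure Ω)) (X : ℕ → Ω → ℝ) : Prop :=
  (∀ i, ∀ φ : ℝ → ℝ, Measurable φ →
      HasFiniteUpperExp 𝒬 (fun ω => φ (X i ω)) →
      HasFiniteUpperExp 𝒬 (fun ω => φ (X 0 ω)) →
      upperExp 𝒬 (fun ω => φ (X i ω)) = upperExp 𝒬 (fun ω => φ (X 0 ω))) ∧
  (∀ i : ℕ, PengIndep 𝒬 (fun ω (j : Fin (i + 1)) => X (j : ℕ) ω) (X (i + 1)))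

/-- Partial sum `S_n = X_0 + ⋯ + X_{n-1}` (the first `n` variables). -/
def partialSum {Ω : Type*} (X : ℕ → Ω → ℝ) (n : ℕ) (ω : Ω) : ℝ :=
  ∑ i ∈ Finset.range n, X i ω

/-!
If `E̅[Y] = E̅[-Y] = 0`, then `Y` has mean zero under every `P ∈ 𝒬`, so no cross term survives in
`E̅[(c + Y)²] = c² + E̅[Y²]`. When `Y` is independent of the past, `c` may be replaced by any
function of the past. Adding the summands in increasing order of index, the second moments of
a centered independent sequence therefore add up exactly.
-/

section UpperExpectation

variable {Ω : Type*} [MeasurableSpace Ω] {𝒬 : Set (Measure Ω)} {X Y : Ω → ℝ}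

lemma upperExp_congr (h : ∀ P ∈ 𝒬, ∫ ω, X ω ∂P = ∫ ω, Y ω ∂P) :
    upperExp 𝒬 X = upperExp 𝒬 Y :=
  congrArg sSup (Set.image_congr h)

lemma HasFiniteUpperExp.integral_le_upperExp (hX : HasFiniteUpperExp 𝒬 X) {P : Measure Ω}
    (hP : P ∈ 𝒬) : ∫ ω, X ω ∂P ≤ upperExp 𝒬 X :=
  le_csSup hX.2 (Set.mem_image_of_mem _ hP)

lemma HasFiniteUpperExp.add (hX : HasFiniteUpperExp 𝒬 X) (hY : HasFiniteUpperExp 𝒬 Y) :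
    HasFiniteUpperExp 𝒬 (fun ω => X ω + Y ω) := by
  refine ⟨fun P hP => (hX.1 P hP).add (hY.1 P hP), upperExp 𝒬 X + upperExp 𝒬 Y, ?_⟩
  rintro _ ⟨P, hP, rfl⟩
  dsimp only
  rw [integral_add (hX.1 P hP) (hY.1 P hP)]
  exact add_le_add (hX.integral_le_upperExp hP) (hY.integral_le_upperExp hP)

lemma HasFiniteUpperExp.of_abs_le (hY : HasFiniteUpperExp 𝒬 Y) (hX : Measurable X)
    (hXY : ∀ ω, |X ω| ≤ Y ω) : HasFiniteUpperExp 𝒬 X := by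
  have hint : ∀ P ∈ 𝒬, Integrable X P := fun P hP =>
    (hY.1 P hP).mono' hX.aestronglyMeasurable (.of_forall hXY)
  refine ⟨hint, upperExp 𝒬 Y, ?_⟩
  rintro _ ⟨P, hP, rfl⟩
  exact (integral_mono (hint P hP) (hY.1 P hP) fun ω => (le_abs_self _).trans (hXY ω)).trans
    (hY.integral_le_upperExp hP)

lemma HasFiniteUpperExp.sq_add (hXm : Measurable X) (hYm : Measurable Y)
    (hX : HasFiniteUpperExp 𝒬 (fun ω => X ω ^ 2)) (hY : HasFiniteUpperExp 𝒬 (fun ω => Y ω ^ 2)) :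
    HasFiniteUpperExp 𝒬 (fun ω => (X ω + Y ω) ^ 2) := by
  refine ((hX.add hY).add (hX.add hY)).of_abs_le ((hXm.add hYm).pow_const 2) fun ω => ?_
  rw [abs_sq, ← two_mul]
  exact add_sq_le

lemma HasFiniteUpperExp.sq_sum {ι : Type*} {Z : ι → Ω → ℝ} {s : Finset ι}
    (hZm : ∀ i ∈ s, Measurable (Z i))
    (hZ : ∀ i ∈ s, HasFiniteUpperExp 𝒬 (fun ω => Z i ω ^ 2)) :
    HasFiniteUpperExp 𝒬 (fun ω => (∑ i ∈ s, Z i ω) ^ 2) := by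
  classical
  induction s using Finset.induction_on with
  | empty => exact ⟨by simp, 0, by rintro _ ⟨P, -, rfl⟩; simp⟩
  | insert a s ha ih =>
    rw [Finset.forall_mem_insert] at hZm hZ
    simp only [Finset.sum_insert ha]
    exact sq_add hZm.1 (Finset.measurable_fun_sum s hZm.2) hZ.1 (ih hZm.2 hZ.2)

lemma hasFiniteUpperExp_const (hprob : ∀ P ∈ 𝒬, IsProbabilityMeasure P) (c : ℝ) :
    HasFiniteUpperExp 𝒬 (fun _ => c) := by
  refine ⟨fun P hP => have := hprob P hP; integrable_const c, c, ?_⟩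
  rintro _ ⟨P, hP, rfl⟩
  have := hprob P hP
  simp

lemma HasFiniteUpperExp.of_sq (hprob : ∀ P ∈ 𝒬, IsProbabilityMeasure P) (hXm : Measurable X)
    (hX : HasFiniteUpperExp 𝒬 (fun ω => X ω ^ 2)) : HasFiniteUpperExp 𝒬 X := by
  refine ((hasFiniteUpperExp_const hprob 1).add hX).of_abs_le hXm fun ω => ?_
  rw [← sq_abs]
  nlinarith [sq_nonneg (|X ω| - 1), abs_nonneg (X ω)]

lemma upperExp_const_add (h𝒬 : 𝒬.Nonempty) (hprob : ∀ P ∈ 𝒬, IsProbabilityMeasure P)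
    (hX : HasFiniteUpperExp 𝒬 X) (c : ℝ) :
    upperExp 𝒬 (fun ω => c + X ω) = c + upperExp 𝒬 X := by
  have hint : ∀ P ∈ 𝒬, ∫ ω, (c + X ω) ∂P = c + ∫ ω, X ω ∂P := fun P hP => by
    have := hprob P hP
    simp [integral_add (integrable_const c) (hX.1 P hP)]
  calc upperExp 𝒬 (fun ω => c + X ω)
      = sSup (OrderIso.addLeft c '' ((fun P : Measure Ω => ∫ ω, X ω ∂P) '' 𝒬)) := by
        rw [upperExp, Set.image_image]
        exact congrArg sSup (Set.image_congr hint)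
    _ = c + upperExp 𝒬 X := ((OrderIso.addLeft c).map_csSup' (h𝒬.image _) hX.2).symm

lemma upperExp_const_add_sq (h𝒬 : 𝒬.Nonempty) (hprob : ∀ P ∈ 𝒬, IsProbabilityMeasure P)
    (hXm : Measurable X) (hX : HasFiniteUpperExp 𝒬 (fun ω => X ω ^ 2))
    (hmean : ∀ P ∈ 𝒬, ∫ ω, X ω ∂P = 0) (c : ℝ) :
    upperExp 𝒬 (fun ω => (c + X ω) ^ 2) = c ^ 2 + upperExp 𝒬 (fun ω => X ω ^ 2) := by
  rw [← upperExp_const_add h𝒬 hprob hX]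
  refine upperExp_congr fun P hP => ?_
  have := hprob P hP
  have hXint : Integrable (fun ω => 2 * c * X ω) P := ((hX.of_sq hprob hXm).1 P hP).const_mul _
  have hcX : Integrable (fun ω => c ^ 2 + X ω ^ 2) P := (integrable_const _).add (hX.1 P hP)
  calc ∫ ω, (c + X ω) ^ 2 ∂P = ∫ ω, ((c ^ 2 + X ω ^ 2) + 2 * c * X ω) ∂P := by
        congr with ω
        ring
    _ = ∫ ω, (c ^ 2 + X ω ^ 2) ∂P := by
        rw [integral_add hcX hXint, integral_const_mul, hmean P hP, mul_zero, add_zero]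

lemma integral_eq_zero_of_upperExp_nonpos (hX : HasFiniteUpperExp 𝒬 X)
    (hX' : HasFiniteUpperExp 𝒬 (fun ω => -X ω)) (hle : upperExp 𝒬 X ≤ 0)
    (hle' : upperExp 𝒬 (fun ω => -X ω) ≤ 0) {P : Measure Ω} (hP : P ∈ 𝒬) :
    ∫ ω, X ω ∂P = 0 := by
  have hneg := (hX'.integral_le_upperExp hP).trans hle'
  rw [integral_neg, neg_nonpos] at hneg
  exact le_antisymm ((hX.integral_le_upperExp hP).trans hle) hneg

end UpperExpectation

section Independence

variable {Ω : Type*} [MeasurableSpace Ω] {𝒬 : Set (Measure Ω)}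

lemma PengIndep.upperExp_add_sq (h𝒬 : 𝒬.Nonempty) (hprob : ∀ P ∈ 𝒬, IsProbabilityMeasure P)
    {d : ℕ} {X : Ω → Fin d → ℝ} {Y : Ω → ℝ} (hXY : PengIndep 𝒬 X Y) (hXm : Measurable X)
    (hYm : Measurable Y) {f : (Fin d → ℝ) → ℝ} (hf : Measurable f)
    (hfX : HasFiniteUpperExp 𝒬 (fun ω => f (X ω) ^ 2))
    (hY : HasFiniteUpperExp 𝒬 (fun ω => Y ω ^ 2)) (hmean : ∀ P ∈ 𝒬, ∫ ω, Y ω ∂P = 0) :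
    upperExp 𝒬 (fun ω => (f (X ω) + Y ω) ^ 2) =
      upperExp 𝒬 (fun ω => f (X ω) ^ 2) + upperExp 𝒬 (fun ω => Y ω ^ 2) := by
  have hinner : ∀ ω, upperExp 𝒬 (fun ω' => (f (X ω) + Y ω') ^ 2) =
      upperExp 𝒬 (fun ω' => Y ω' ^ 2) + f (X ω) ^ 2 := fun ω => by
    rw [upperExp_const_add_sq h𝒬 hprob hYm hY hmean, add_comm]
  have hindep := hXY (fun x y => (f x + y) ^ 2) (by fun_prop)
    (.sq_add (hf.comp hXm) hYm hfX hY)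
    (fun x => .sq_add measurable_const hYm (hasFiniteUpperExp_const hprob _) hY)
    (by simpa only [hinner] using (hasFiniteUpperExp_const hprob _).add hfX)
  simp only [hinner] at hindep
  rw [hindep, upperExp_const_add h𝒬 hprob hfX, add_comm]

lemma upperExp_sum_add_sq_of_lt (h𝒬 : 𝒬.Nonempty) (hprob : ∀ P ∈ 𝒬, IsProbabilityMeasure P)
    {X : ℕ → Ω → ℝ} (hmeas : ∀ i, Measurable (X i))
    (hindep : ∀ i : ℕ, PengIndep 𝒬 (fun ω (j : Fin (i + 1)) => X (j : ℕ) ω) (X (i + 1)))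
    (hsq : ∀ i, HasFiniteUpperExp 𝒬 (fun ω => X i ω ^ 2))
    (hmean : ∀ i, ∀ P ∈ 𝒬, ∫ ω, X i ω ∂P = 0) {s : Finset ℕ} {k : ℕ} (hs : ∀ i ∈ s, i < k) :
    upperExp 𝒬 (fun ω => (∑ i ∈ s, X i ω + X k ω) ^ 2) =
      upperExp 𝒬 (fun ω => (∑ i ∈ s, X i ω) ^ 2) + upperExp 𝒬 (fun ω => X k ω ^ 2) := by
  cases k with
  | zero =>
    have hempty : s = ∅ := Finset.eq_empty_of_forall_notMem fun i hi => Nat.not_lt_zero i (hs i hi)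
    simp [hempty, upperExp, h𝒬.image_const]
  | succ k =>
    let f : (Fin (k + 1) → ℝ) → ℝ := fun x => ∑ j : Fin (k + 1) with j.val ∈ s, x j
    have hfX : ∀ ω, f (fun j => X j ω) = ∑ i ∈ s, X i ω := fun ω => by
      have hinter : Finset.range (k + 1) ∩ s = s :=
        Finset.inter_eq_right.2 fun i hi => Finset.mem_range.2 (hs i hi)
      dsimp only [f]
      rw [Finset.sum_filter, Fin.sum_univ_eq_sum_range (fun i => if i ∈ s then X i ω else 0),
        Finset.sum_ite_mem, hinter]
    have hf : Measurable f := by fun_prop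
    have hfin := HasFiniteUpperExp.sq_sum (s := s) (fun i _ => hmeas i) fun i _ => hsq i
    simp only [← hfX] at hfin ⊢
    exact (hindep k).upperExp_add_sq h𝒬 hprob (measurable_pi_lambda _ fun j => hmeas j)
      (hmeas _) hf hfin (hsq _) (hmean _)

lemma upperExp_sq_sum_eq_sum (h𝒬 : 𝒬.Nonempty) (hprob : ∀ P ∈ 𝒬, IsProbabilityMeasure P)
    {X : ℕ → Ω → ℝ} (hmeas : ∀ i, Measurable (X i))
    (hindep : ∀ i : ℕ, PengIndep 𝒬 (fun ω (j : Fin (i + 1)) => X (j : ℕ) ω) (X (i + 1)))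
    (hsq : ∀ i, HasFiniteUpperExp 𝒬 (fun ω => X i ω ^ 2))
    (hmean : ∀ i, ∀ P ∈ 𝒬, ∫ ω, X i ω ∂P = 0) (s : Finset ℕ) :
    upperExp 𝒬 (fun ω => (∑ i ∈ s, X i ω) ^ 2) = ∑ i ∈ s, upperExp 𝒬 (fun ω => X i ω ^ 2) := by
  induction s using Finset.induction_on_max with
  | empty => simp [upperExp, h𝒬.image_const]
  | insert k s hs ih =>
    have hk : k ∉ s := fun hk => (hs k hk).false
    simp only [Finset.sum_insert hk, add_comm (X k _)]
    rw [upperExp_sum_add_sq_of_lt h𝒬 hprob hmeas hindep hsq hmean hs, ih, add_comm]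

theorem upperExp_sq_partialSum_le_general (h𝒬 : 𝒬.Nonempty)
    (hprob : ∀ P ∈ 𝒬, IsProbabilityMeasure P) {X : ℕ → Ω → ℝ} (hmeas : ∀ i, Measurable (X i))
    (hindep : ∀ i : ℕ, PengIndep 𝒬 (fun ω (j : Fin (i + 1)) => X (j : ℕ) ω) (X (i + 1)))
    (hsq : ∀ i, HasFiniteUpperExp 𝒬 (fun ω => X i ω ^ 2))
    (hmean : ∀ i, ∀ P ∈ 𝒬, ∫ ω, X i ω ∂P = 0) (m n : ℕ) :
    upperExp 𝒬 (fun ω => (partialSum X (m + n) ω - partialSum X m ω) ^ 2) =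
      ∑ i ∈ Finset.Ico m (m + n), upperExp 𝒬 (fun ω => X i ω ^ 2) := by
  simp only [partialSum, ← Finset.sum_Ico_eq_sub _ (Nat.le_add_right m n)]
  exact upperExp_sq_sum_eq_sum h𝒬 hprob hmeas hindep hsq hmean _

lemma IsIIDUnder.integral_eq_zero (hprob : ∀ P ∈ 𝒬, IsProbabilityMeasure P) {X : ℕ → Ω → ℝ}
    (hiid : IsIIDUnder 𝒬 X) (hmeas : ∀ i, Measurable (X i))
    (hsq : ∀ i, HasFiniteUpperExp 𝒬 (fun ω => X i ω ^ 2)) (hmean : upperExp 𝒬 (X 0) = 0)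
    (hmean' : upperExp 𝒬 (fun ω => -X 0 ω) = 0) (i : ℕ) {P : Measure Ω} (hP : P ∈ 𝒬) :
    ∫ ω, X i ω ∂P = 0 := by
  have hX : ∀ i, HasFiniteUpperExp 𝒬 (X i) := fun i => (hsq i).of_sq hprob (hmeas i)
  have hX' : ∀ i, HasFiniteUpperExp 𝒬 (fun ω => -X i ω) := fun i =>
    .of_sq hprob (hmeas i).neg (by simpa only [neg_sq] using hsq i)
  exact integral_eq_zero_of_upperExp_nonpos (hX i) (hX' i)
    ((hiid.1 i id measurable_id (hX i) (hX 0)).trans hmean).le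
    ((hiid.1 i Neg.neg measurable_neg (hX' i) (hX' 0)).trans hmean').le hP

end Independence

/-- Second–moment bound: for a centered IID sequence under the upper expectation,
`E̅[(S_{m+n} - S_m)²] ≤ n E̅[X_1²]`. -/
theorem upperExp_sq_partialSum_le {Ω : Type*} [MeasurableSpace Ω]
    (𝒬 : Set (Measure Ω)) (h𝒬 : 𝒬.Nonempty)
    (hprob : ∀ P ∈ 𝒬, IsProbabilityMeasure P)
    (X : ℕ → Ω → ℝ) (hmeas : ∀ i, Measurable (X i))
    (hiid : IsIIDUnder 𝒬 X)
    (hmean : upperExp 𝒬 (X 0) = 0)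
    (hmean' : upperExp 𝒬 (fun ω => -X 0 ω) = 0)
    (hmom : HasFiniteUpperExp 𝒬 (fun ω => X 0 ω ^ 2))
    (hfin : ∀ m n : ℕ, HasFiniteUpperExp 𝒬
      (fun ω => (partialSum X (m + n) ω - partialSum X m ω) ^ 2)) :
    ∀ m : ℕ, ∀ n : ℕ, 1 ≤ n →
      upperExp 𝒬 (fun ω => (partialSum X (m + n) ω - partialSum X m ω) ^ 2)
        ≤ (n : ℝ) * upperExp 𝒬 (fun ω => X 0 ω ^ 2) := by
  have hsq : ∀ i, HasFiniteUpperExp 𝒬 (fun ω => X i ω ^ 2) := fun i => by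
    simpa [partialSum, Finset.sum_range_succ] using hfin i 1
  have hsq_eq : ∀ i, upperExp 𝒬 (fun ω => X i ω ^ 2) = upperExp 𝒬 (fun ω => X 0 ω ^ 2) :=
    fun i => hiid.1 i (· ^ 2) (by fun_prop) (hsq i) hmom
  intro m n _
  rw [upperExp_sq_partialSum_le_general h𝒬 hprob hmeas hiid.2 hsq
    fun i _ hP => hiid.integral_eq_zero hprob hmeas hsq hmean hmean' i hP]
  simp [hsq_eq]
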